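/- Square-case bound: let n ≥ 2, let A ∈ ℝ^{n×n} be nonsingular, and let P, Q ∈ ℝ^{n×n} be orthogonal with A = P B̄ Qᵀ, where B̄ ∈ ℝ^{n×n} is lower bidiagonal with diagonal entries α_i > 0 (1 ≤ i ≤ n) and subdiagonal entries β_{i+1} > 0 (1 ≤ i ≤ n−1), all other entries zero. Let σ_1 > σ_2 > ⋯ > σ_n > 0 be the singular values of A. Then for every k with 1 ≤ k ≤ n−1, the smallest singular value θ̄_k^{(k)} of the leading k×k principal submatrix B̄_k of B̄ and the smallest singular value θ_k^{(k)} of the leading (k+1)×k submatrix B_k of B̄ satisfy σ_n < θ̄_k^{(k)} < θ_k^{(k)} < σ_k. -/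

import Mathlib

open Matrix

/-- Spectral norm (largest singular value) of a real matrix. -/
noncomputable def specNorm {a b : ℕ} (M : Matrix (Fin a) (Fin b) ℝ) : ℝ :=
  ‖LinearMap.toContinuousLinearMap (Matrix.toEuclideanLin M)‖

/-- The `j`-th largest singular value of a real matrix (`j ≥ 1`), characterized via the
Eckart–Young theorem as the minimal spectral-norm distance to matrices of rank `< j`;
it is `0` when `j` exceeds the smaller dimension. -/
noncomputable def singVal {a b : ℕ} (M : Matrix (Fin a) (Fin b) ℝ) (j : ℕ) : ℝ :=
  sInf {r : ℝ | ∃ D : Matrix (Fin a) (Fin b) ℝ, D.rank < j ∧ r = specNorm (M - D)}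

/-- The matrix of the first `k` columns of `M`. -/
def colSub {a b : ℕ} (M : Matrix (Fin a) (Fin b) ℝ) (k : ℕ) (hk : k ≤ b) :
    Matrix (Fin a) (Fin k) ℝ :=
  M.submatrix id fun j => ⟨j.1, lt_of_lt_of_le j.2 hk⟩

/-- The leading `r × c` submatrix of `M`. -/
def subUL {a b : ℕ} (M : Matrix (Fin a) (Fin b) ℝ) (r c : ℕ) (hr : r ≤ a) (hc : c ≤ b) :
    Matrix (Fin r) (Fin c) ℝ :=
  M.submatrix (fun i => ⟨i.1, lt_of_lt_of_le i.2 hr⟩) (fun j => ⟨j.1, lt_of_lt_of_le j.2 hc⟩)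

/-!
The smallest singular value `s` of `M` is the minimum of `‖M x‖ / ‖x‖`, and a minimizer is an
eigenvector of `Mᵀ M`. For an unreduced lower bidiagonal `M` this Gram matrix is tridiagonal with
nowhere zero subdiagonal, so a minimizer cannot have last coordinate `0`: on vectors ending in `0`
the bound `s ‖x‖ ≤ ‖M x‖` is strict. Applied to `B̄ᵀ` and vectors supported on the first `k`
coordinates, this gives `σ_n < θ̄_k`; for `θ̄_k < θ_k`, the extra row of `B_k` contributes a
positive amount exactly when the last coordinate is not `0`. Finally `θ_k ‖x‖ ≤ ‖B̄ x‖` on the span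
of the first `k` basis vectors, where equality for `x ≠ 0` forces a nonzero last coordinate, hence
`⟪B̄ x, B̄ e_{k+1}⟫ ≠ 0`; tilting the span in the direction `e_{k+1}` makes the bound strict, whence
`θ_k < σ_k`.
-/

lemma rank_lt_card_iff_exists_mulVec_eq_zero {m n K : Type*} [Fintype n] [Field K]
    (D : Matrix m n K) : D.rank < Fintype.card n ↔ ∃ x ≠ 0, D *ᵥ x = 0 := by
  have h := LinearMap.finrank_range_add_finrank_ker D.mulVecLin
  rw [Module.finrank_fintype_fun_eq_card] at h
  have hpos : D.rank < Fintype.card n ↔ 0 < Module.finrank K (LinearMap.ker D.mulVecLin) := by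
    rw [Matrix.rank]
    omega
  rw [hpos, Module.finrank_pos_iff, Submodule.nontrivial_iff_ne_bot, Submodule.ne_bot_iff]
  simp [and_comm]

section DotProduct

variable {ι : Type*} [Fintype ι]

lemma norm_toLp_sq (x : ι → ℝ) : ‖WithLp.toLp 2 x‖ ^ 2 = x ⬝ᵥ x := by
  rw [EuclideanSpace.real_norm_sq_eq]
  simp only [dotProduct, sq]

lemma dotProduct_self_nonneg (x : ι → ℝ) : 0 ≤ x ⬝ᵥ x :=
  dotProduct_star_self_nonneg x

lemma dotProduct_self_pos {x : ι → ℝ} (hx : x ≠ 0) : 0 < x ⬝ᵥ x :=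
  dotProduct_star_self_pos_iff.2 hx

lemma add_smul_dotProduct_self (x y : ι → ℝ) (t : ℝ) :
    (x + t • y) ⬝ᵥ (x + t • y) = x ⬝ᵥ x + 2 * t * (x ⬝ᵥ y) + t ^ 2 * (y ⬝ᵥ y) := by
  simp only [add_dotProduct, dotProduct_add, smul_dotProduct, dotProduct_smul, smul_eq_mul,
    dotProduct_comm y x]
  ring

lemma mulVec_dotProduct_self_of_transpose_mul_self_eq_one {κ : Type*} [Fintype κ] [DecidableEq κ]
    {P : Matrix ι κ ℝ} (hP : Pᵀ * P = 1) (x : κ → ℝ) : (P *ᵥ x) ⬝ᵥ (P *ᵥ x) = x ⬝ᵥ x := by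
  rw [dotProduct_mulVec, ← mulVec_transpose, mulVec_mulVec, hP, one_mulVec]

lemma transpose_mul_self_mulVec_eq_of_forall_le {κ : Type*} [Fintype κ]
    (M : Matrix ι κ ℝ) {μ : ℝ} (h : ∀ x, μ * (x ⬝ᵥ x) ≤ (M *ᵥ x) ⬝ᵥ (M *ᵥ x)) {v : κ → ℝ}
    (hv : (M *ᵥ v) ⬝ᵥ (M *ᵥ v) = μ * (v ⬝ᵥ v)) : (Mᵀ * M) *ᵥ v = μ • v := by
  classical
  have hquad (x : κ → ℝ) :
      x ⬝ᵥ ((Mᵀ * M - μ • 1) *ᵥ x) = (M *ᵥ x) ⬝ᵥ (M *ᵥ x) - μ * (x ⬝ᵥ x) := by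
    rw [sub_mulVec, dotProduct_sub, smul_mulVec, one_mulVec, dotProduct_smul, smul_eq_mul,
      ← mulVec_mulVec, dotProduct_mulVec, vecMul_transpose]
  have hpos : (Mᵀ * M - μ • (1 : Matrix κ κ ℝ)).PosSemidef := by
    refine .of_dotProduct_mulVec_nonneg ?_ fun x => ?_
    · simp [IsHermitian, conjTranspose_eq_transpose_of_trivial]
    · rw [star_trivial, hquad]
      exact sub_nonneg.2 (h x)
  have hker := (hpos.dotProduct_mulVec_zero_iff v).1 (by rw [star_trivial, hquad, hv, sub_self])
  rwa [sub_mulVec, smul_mulVec, one_mulVec, sub_eq_zero] at hker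

end DotProduct

section SpecNorm

open scoped Matrix.Norms.L2Operator

variable {a b c : ℕ}

lemma specNorm_eq_l2_opNorm (M : Matrix (Fin a) (Fin b) ℝ) : specNorm M = ‖M‖ := rfl

lemma norm_toLp_mulVec_le (M : Matrix (Fin a) (Fin b) ℝ) (x : Fin b → ℝ) :
    ‖WithLp.toLp 2 (M *ᵥ x)‖ ≤ specNorm M * ‖WithLp.toLp 2 x‖ :=
  l2_opNorm_mulVec M (WithLp.toLp 2 x)

lemma specNorm_nonneg (M : Matrix (Fin a) (Fin b) ℝ) : 0 ≤ specNorm M := norm_nonneg _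

lemma specNorm_transpose (M : Matrix (Fin a) (Fin b) ℝ) : specNorm Mᵀ = specNorm M := by
  simpa [specNorm_eq_l2_opNorm] using l2_opNorm_conjTranspose M

lemma specNorm_mul_le (M : Matrix (Fin a) (Fin b) ℝ) (N : Matrix (Fin b) (Fin c) ℝ) :
    specNorm (M * N) ≤ specNorm M * specNorm N :=
  l2_opNorm_mul M N

lemma specNorm_vecMulVec_le (u : Fin a → ℝ) (v : Fin b → ℝ) :
    specNorm (vecMulVec u v) ≤ ‖WithLp.toLp 2 u‖ * ‖WithLp.toLp 2 v‖ := by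
  refine ContinuousLinearMap.opNorm_le_bound _ (by positivity) fun y => ?_
  have hy : toEuclideanLin (vecMulVec u v) y = inner ℝ (WithLp.toLp 2 v) y • WithLp.toLp 2 u := by
    rw [← WithLp.toLp_ofLp (p := 2) y, EuclideanSpace.inner_toLp_toLp, ← WithLp.toLp_smul,
      toLpLin_toLp, toLin'_apply, vecMulVec_mulVec]
    simp [dotProduct_comm]
  rw [LinearMap.coe_toContinuousLinearMap', hy, norm_smul, Real.norm_eq_abs]
  nlinarith [abs_real_inner_le_norm (WithLp.toLp 2 v) y, norm_nonneg (WithLp.toLp 2 u)]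

lemma specNorm_le_one_of_transpose_mul_self_eq_one {P : Matrix (Fin a) (Fin b) ℝ}
    (hP : Pᵀ * P = 1) : specNorm P ≤ 1 := by
  have h := l2_opNorm_conjTranspose_mul_self P
  rw [conjTranspose_eq_transpose_of_trivial, hP] at h
  rw [specNorm_eq_l2_opNorm]
  have h1 : ‖(1 : Matrix (Fin b) (Fin b) ℝ)‖ ≤ 1 := by
    rw [← diagonal_one, l2_opNorm_diagonal]
    exact (pi_norm_le_iff_of_nonneg zero_le_one).2 (by simp)
  nlinarith

end SpecNorm

lemma exists_forall_norm_div_norm_mul_le {V F G : Type*} [NormedAddCommGroup V] [NormedSpace ℝ V]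
    [FiniteDimensional ℝ V] [Nontrivial V] [NormedAddCommGroup F] [NormedSpace ℝ F]
    [NormedAddCommGroup G] [NormedSpace ℝ G] (S : V →ₗ[ℝ] F) {T : V →ₗ[ℝ] G}
    (hT : ∀ x ≠ 0, T x ≠ 0) : ∃ x₀ ≠ 0, ∀ x, ‖S x₀‖ / ‖T x₀‖ * ‖T x‖ ≤ ‖S x‖ := by
  have : ProperSpace V := FiniteDimensional.proper ℝ V
  have hne : ∀ x ∈ Metric.sphere (0 : V) 1, x ≠ 0 :=
    fun x hx => ne_zero_of_mem_unit_sphere ⟨x, hx⟩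
  have hcont : ContinuousOn (fun x => ‖S x‖ / ‖T x‖) (Metric.sphere 0 1) :=
    S.continuous_of_finiteDimensional.norm.continuousOn.div
      T.continuous_of_finiteDimensional.norm.continuousOn
      fun x hx => norm_ne_zero_iff.2 (hT x (hne x hx))
  obtain ⟨x₀, hx₀, hmin⟩ := (isCompact_sphere (0 : V) 1).exists_isMinOn
    (NormedSpace.sphere_nonempty.2 zero_le_one) hcont
  refine ⟨x₀, hne x₀ hx₀, fun x => ?_⟩
  rcases eq_or_ne x 0 with rfl | hx
  · simp
  have hx' : ‖x‖ ≠ 0 := norm_ne_zero_iff.2 hx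
  rw [← le_div_iff₀ (norm_pos_iff.2 (hT x hx))]
  calc ‖S x₀‖ / ‖T x₀‖ ≤ ‖S (‖x‖⁻¹ • x)‖ / ‖T (‖x‖⁻¹ • x)‖ :=
        hmin (a := ‖x‖⁻¹ • x) (by simp [norm_smul, hx'])
    _ = ‖S x‖ / ‖T x‖ := by
        simp only [map_smul, norm_smul]
        exact mul_div_mul_left _ _ (norm_ne_zero_iff.2 (inv_ne_zero hx'))

section SingVal

variable {a b c d j : ℕ}

lemma singVal_nonneg (M : Matrix (Fin a) (Fin b) ℝ) (j : ℕ) : 0 ≤ singVal M j :=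
  Real.sInf_nonneg (by rintro _ ⟨D, -, rfl⟩; exact specNorm_nonneg _)

lemma singVal_le_specNorm_sub (M : Matrix (Fin a) (Fin b) ℝ) {D : Matrix (Fin a) (Fin b) ℝ}
    (hD : D.rank < j) : singVal M j ≤ specNorm (M - D) :=
  csInf_le ⟨0, by rintro _ ⟨D, -, rfl⟩; exact specNorm_nonneg _⟩ ⟨D, hD, rfl⟩

lemma le_singVal_of_forall_le_specNorm_sub (hj : 0 < j) {M : Matrix (Fin a) (Fin b) ℝ} {ρ : ℝ}
    (h : ∀ D : Matrix (Fin a) (Fin b) ℝ, D.rank < j → ρ ≤ specNorm (M - D)) : ρ ≤ singVal M j :=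
  le_csInf ⟨_, 0, by rwa [rank_zero], rfl⟩ (by rintro _ ⟨D, hD, rfl⟩; exact h D hD)

lemma singVal_transpose (M : Matrix (Fin a) (Fin b) ℝ) (hj : 0 < j) :
    singVal Mᵀ j = singVal M j := by
  have hle {a b : ℕ} (M : Matrix (Fin a) (Fin b) ℝ) : singVal M j ≤ singVal Mᵀ j := by
    refine le_singVal_of_forall_le_specNorm_sub hj fun D hD => ?_
    rw [← specNorm_transpose, transpose_sub, transpose_transpose]
    exact singVal_le_specNorm_sub M (by rwa [rank_transpose])
  exact (hle Mᵀ).antisymm (hle M)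

lemma singVal_mul_mul_le (hj : 0 < j) (M : Matrix (Fin b) (Fin c) ℝ)
    {L : Matrix (Fin a) (Fin b) ℝ} (hL : specNorm L ≤ 1)
    {R : Matrix (Fin c) (Fin d) ℝ} (hR : specNorm R ≤ 1) :
    singVal (L * M * R) j ≤ singVal M j := by
  refine le_singVal_of_forall_le_specNorm_sub hj fun D hD => ?_
  calc singVal (L * M * R) j
      ≤ specNorm (L * M * R - L * D * R) := singVal_le_specNorm_sub _
        (((rank_mul_le_left _ _).trans (rank_mul_le_right _ _)).trans_lt hD)
    _ = specNorm (L * (M - D) * R) := by rw [Matrix.mul_sub, Matrix.sub_mul]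
    _ ≤ specNorm L * specNorm (M - D) * specNorm R :=
        (specNorm_mul_le _ _).trans
          (mul_le_mul_of_nonneg_right (specNorm_mul_le _ _) (specNorm_nonneg _))
    _ ≤ 1 * specNorm (M - D) * 1 := by
        have := specNorm_nonneg (M - D)
        have := specNorm_nonneg R
        gcongr
    _ = specNorm (M - D) := by ring

lemma singVal_mul_mul_transpose (hj : 0 < j) (M : Matrix (Fin b) (Fin c) ℝ)
    {P : Matrix (Fin a) (Fin b) ℝ} (hP : Pᵀ * P = 1)
    {Q : Matrix (Fin d) (Fin c) ℝ} (hQ : Qᵀ * Q = 1) :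
    singVal (P * M * Qᵀ) j = singVal M j := by
  have hP1 := specNorm_le_one_of_transpose_mul_self_eq_one hP
  have hQ1 := specNorm_le_one_of_transpose_mul_self_eq_one hQ
  refine le_antisymm (singVal_mul_mul_le hj M hP1 (by rwa [specNorm_transpose])) ?_
  have hM : Pᵀ * (P * M * Qᵀ) * Q = M := by
    rw [← Matrix.mul_assoc, ← Matrix.mul_assoc, hP, Matrix.one_mul, Matrix.mul_assoc, hQ,
      Matrix.mul_one]
  conv_lhs => rw [← hM]
  exact singVal_mul_mul_le hj _ (by rwa [specNorm_transpose]) hQ1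

/-- Subtracting the rank-one matrix `M x xᵀ / (xᵀ x)` from `M` makes it vanish on `x`. -/
lemma singVal_mul_norm_le (M : Matrix (Fin a) (Fin b) ℝ) (x : Fin b → ℝ) :
    singVal M b * ‖WithLp.toLp 2 x‖ ≤ ‖WithLp.toLp 2 (M *ᵥ x)‖ := by
  rcases eq_or_ne x 0 with rfl | hx
  · simp
  have hx' : 0 < ‖WithLp.toLp 2 x‖ := by simpa using hx
  let R := vecMulVec (M *ᵥ x) ((x ⬝ᵥ x)⁻¹ • x)
  have hker : (M - R) *ᵥ x = 0 := by
    rw [sub_mulVec, vecMulVec_mulVec, smul_dotProduct, smul_eq_mul,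
      inv_mul_cancel₀ (dotProduct_self_pos hx).ne', MulOpposite.op_one, one_smul, sub_self]
  have hR : specNorm R ≤ ‖WithLp.toLp 2 (M *ᵥ x)‖ / ‖WithLp.toLp 2 x‖ := by
    refine (specNorm_vecMulVec_le _ _).trans_eq ?_
    rw [WithLp.toLp_smul, norm_smul, ← norm_toLp_sq, norm_inv, norm_pow, norm_norm]
    field_simp
  rw [← le_div_iff₀ hx']
  calc singVal M b ≤ specNorm (M - (M - R)) :=
        singVal_le_specNorm_sub M (by
          simpa using (rank_lt_card_iff_exists_mulVec_eq_zero (M - R)).2 ⟨x, hx, hker⟩)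
    _ = specNorm R := by rw [sub_sub_cancel]
    _ ≤ _ := hR

lemma singVal_sq_mul_dotProduct_le (M : Matrix (Fin a) (Fin b) ℝ) (x : Fin b → ℝ) :
    singVal M b ^ 2 * (x ⬝ᵥ x) ≤ (M *ᵥ x) ⬝ᵥ (M *ᵥ x) := by
  rw [← norm_toLp_sq, ← norm_toLp_sq, ← mul_pow]
  exact pow_le_pow_left₀ (mul_nonneg (singVal_nonneg _ _) (norm_nonneg _))
    (singVal_mul_norm_le M x) 2

/-- A matrix of rank `< j` kills a nonzero vector of the `j`-dimensional range of `E`. -/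
lemma le_singVal_of_forall_norm_le (hj : 0 < j) (M : Matrix (Fin a) (Fin b) ℝ)
    {E : Matrix (Fin b) (Fin j) ℝ} (hE : ∀ x ≠ 0, E *ᵥ x ≠ 0) {ρ : ℝ}
    (h : ∀ x, ρ * ‖WithLp.toLp 2 (E *ᵥ x)‖ ≤ ‖WithLp.toLp 2 (M *ᵥ (E *ᵥ x))‖) :
    ρ ≤ singVal M j := by
  refine le_singVal_of_forall_le_specNorm_sub hj fun D hD => ?_
  obtain ⟨x, hx, hDx⟩ := (rank_lt_card_iff_exists_mulVec_eq_zero (D * E)).1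
    (by simpa using (rank_mul_le_left D E).trans_lt hD)
  rw [← mulVec_mulVec] at hDx
  have hEx : 0 < ‖WithLp.toLp 2 (E *ᵥ x)‖ := by simpa using hE x hx
  refine le_of_mul_le_mul_right ?_ hEx
  calc ρ * ‖WithLp.toLp 2 (E *ᵥ x)‖ ≤ ‖WithLp.toLp 2 (M *ᵥ (E *ᵥ x))‖ := h x
    _ = ‖WithLp.toLp 2 ((M - D) *ᵥ (E *ᵥ x))‖ := by rw [sub_mulVec, hDx, sub_zero]
    _ ≤ specNorm (M - D) * ‖WithLp.toLp 2 (E *ᵥ x)‖ := norm_toLp_mulVec_le _ _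

lemma lt_singVal_of_forall_lt (hj : 0 < j) (M : Matrix (Fin a) (Fin b) ℝ)
    (E : Matrix (Fin b) (Fin j) ℝ) {θ : ℝ}
    (h : ∀ x ≠ 0, θ ^ 2 * ((E *ᵥ x) ⬝ᵥ (E *ᵥ x)) < (M *ᵥ (E *ᵥ x)) ⬝ᵥ (M *ᵥ (E *ᵥ x))) :
    θ < singVal M j := by
  have : NeZero j := ⟨hj.ne'⟩
  have hE : ∀ x ≠ 0, E *ᵥ x ≠ 0 := fun x hx h0 => by simpa [h0] using h x hx
  obtain ⟨x₀, hx₀, hmin⟩ := exists_forall_norm_div_norm_mul_le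
    (toEuclideanLin (M * E)) (T := toEuclideanLin E)
    fun x hx => by simpa [toLpLin_apply] using hE x.ofLp (by simpa using hx)
  simp only [toLpLin_apply, ← mulVec_mulVec] at hmin
  refine lt_of_lt_of_le ?_ (le_singVal_of_forall_norm_le hj M hE fun x => hmin (WithLp.toLp 2 x))
  have hx₀' : x₀.ofLp ≠ 0 := by simpa using hx₀
  have hEx : 0 < ‖WithLp.toLp 2 (E *ᵥ x₀.ofLp)‖ := by simpa using hE _ hx₀'
  have hlt := h _ hx₀'
  rw [← norm_toLp_sq, ← norm_toLp_sq, ← mul_pow] at hlt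
  rw [lt_div_iff₀ hEx]
  exact lt_of_pow_lt_pow_left₀ 2 (norm_nonneg _) hlt

lemma lt_singVal_card_of_forall_lt (hb : 0 < b) (M : Matrix (Fin a) (Fin b) ℝ) {θ : ℝ}
    (h : ∀ x ≠ 0, θ ^ 2 * (x ⬝ᵥ x) < (M *ᵥ x) ⬝ᵥ (M *ᵥ x)) : θ < singVal M b :=
  lt_singVal_of_forall_lt hb M 1 (by simpa using h)

/-- For the competing subspace, replace `E x` by `E x + ε ⟪M E x, M z⟫ z` with `ε > 0` small: the
gain in `‖M ·‖²` is of order `ε`, the loss in `θ² ‖·‖²` only of order `ε²`. -/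
lemma lt_singVal_of_orthogonal_vector (hj : 0 < j) (M : Matrix (Fin a) (Fin b) ℝ)
    {E : Matrix (Fin b) (Fin j) ℝ} (hE : Eᵀ * E = 1) {z : Fin b → ℝ} (hz : Eᵀ *ᵥ z = 0) {θ : ℝ}
    (hle : ∀ x, θ ^ 2 * (x ⬝ᵥ x) ≤ ((M * E) *ᵥ x) ⬝ᵥ ((M * E) *ᵥ x))
    (hlt : ∀ x ≠ 0, ((M * E) *ᵥ x) ⬝ᵥ (M *ᵥ z) = 0 →
      θ ^ 2 * (x ⬝ᵥ x) < ((M * E) *ᵥ x) ⬝ᵥ ((M * E) *ᵥ x)) :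
    θ < singVal M j := by
  set ε : ℝ := (θ ^ 2 * (z ⬝ᵥ z) + 1)⁻¹
  have hθz : 0 ≤ θ ^ 2 * (z ⬝ᵥ z) := mul_nonneg (sq_nonneg θ) (dotProduct_self_nonneg z)
  have hε : 0 < ε := by positivity
  have hεz : θ ^ 2 * (z ⬝ᵥ z) * ε < 1 := by
    rw [← div_eq_mul_inv, div_lt_one (by positivity)]
    exact lt_add_one _
  refine lt_singVal_of_forall_lt hj M (E + ε • vecMulVec z ((M * E)ᵀ *ᵥ (M *ᵥ z))) fun x hx => ?_
  set f := ((M * E) *ᵥ x) ⬝ᵥ (M *ᵥ z) with hf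
  have hEx : (E + ε • vecMulVec z ((M * E)ᵀ *ᵥ (M *ᵥ z))) *ᵥ x = E *ᵥ x + (ε * f) • z := by
    rw [add_mulVec, smul_mulVec, vecMulVec_mulVec, mulVec_transpose, ← dotProduct_mulVec,
      op_smul_eq_smul, smul_smul, dotProduct_comm]
  have hzE : (E *ᵥ x) ⬝ᵥ z = 0 := by
    rw [dotProduct_comm, dotProduct_mulVec, ← mulVec_transpose, hz, zero_dotProduct]
  have hMz := mul_nonneg (sq_nonneg (ε * f)) (dotProduct_self_nonneg (M *ᵥ z))
  rw [hEx, mulVec_add, mulVec_smul, add_smul_dotProduct_self, add_smul_dotProduct_self, hzE,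
    mulVec_dotProduct_self_of_transpose_mul_self_eq_one hE, mulVec_mulVec, ← hf]
  rcases eq_or_ne f 0 with h0 | h0
  · simpa [h0] using hlt x hx h0
  · have hεf : 0 < ε * f ^ 2 := mul_pos hε (sq_pos_of_ne_zero h0)
    have hgain := mul_lt_mul_of_pos_right hεz hεf
    linarith [hle x]

end SingVal

section Hessenberg

variable {R : Type*} {m r c : ℕ}

/-- Unreduced upper Hessenberg matrices: zero below the subdiagonal, nowhere zero on it. The Gram
matrices of bidiagonal matrices have this form; nothing is asked of the entries above the
subdiagonal, since only the lower part matters for the back substitution in an eigenvector. -/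
structure IsUnreducedUpperHessenberg [Zero R] (T : Matrix (Fin (m + 1)) (Fin (m + 1)) R) :
    Prop where
  eq_zero : ∀ ⦃i j : Fin (m + 1)⦄, (j : ℕ) + 1 < i → T i j = 0
  subdiag_ne_zero : ∀ i : Fin m, T i.succ i.castSucc ≠ 0

/-- Row `i + 1` of the eigenvector equation determines `v i` from the entries of `v` after it. -/
lemma IsUnreducedUpperHessenberg.eq_zero_of_last_eq_zero [Semiring R] [NoZeroDivisors R]
    {T : Matrix (Fin (m + 1)) (Fin (m + 1)) R} (hT : IsUnreducedUpperHessenberg T) {μ : R}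
    {v : Fin (m + 1) → R} (hv : T *ᵥ v = μ • v) (hlast : v (Fin.last m) = 0) : v = 0 := by
  have htail (i : Fin (m + 1)) : ∀ j, i ≤ j → v j = 0 := by
    induction i using Fin.reverseInduction with
    | last => exact fun j hj => by rwa [Fin.last_le_iff.1 hj]
    | cast i ih =>
      have hrow : T i.succ i.castSucc * v i.castSucc = 0 := by
        have h := congrFun hv i.succ
        rwa [Pi.smul_apply, ih _ le_rfl, smul_zero, mulVec, dotProduct,
          Fintype.sum_eq_single i.castSucc] at h
        · intro j hj
          rcases lt_or_gt_of_ne hj with hlt | hgt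
          · rw [hT.eq_zero (Nat.succ_lt_succ hlt), zero_mul]
          · rw [ih j (Fin.castSucc_lt_iff_succ_le.1 hgt), mul_zero]
      intro j hj
      rcases hj.eq_or_lt with rfl | hlt
      · exact (mul_eq_zero.1 hrow).resolve_left (hT.subdiag_ne_zero i)
      · exact ih j (Fin.castSucc_lt_iff_succ_le.1 hlt)
  exact funext fun i => htail i i le_rfl

lemma IsUnreducedUpperHessenberg.mul_dotProduct_lt {M : Matrix (Fin r) (Fin (m + 1)) ℝ}
    (hM : IsUnreducedUpperHessenberg (Mᵀ * M)) {μ : ℝ}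
    (h : ∀ x, μ * (x ⬝ᵥ x) ≤ (M *ᵥ x) ⬝ᵥ (M *ᵥ x)) {x : Fin (m + 1) → ℝ} (hx : x ≠ 0)
    (hlast : x (Fin.last m) = 0) : μ * (x ⬝ᵥ x) < (M *ᵥ x) ⬝ᵥ (M *ᵥ x) :=
  (h x).lt_of_ne fun heq => hx <|
    hM.eq_zero_of_last_eq_zero (transpose_mul_self_mulVec_eq_of_forall_le M h heq.symm) hlast

/-- Lower bidiagonal matrices with nowhere zero diagonal and subdiagonal. The shape is arbitrary,
with positions compared through `ℕ`, so that the definition applies to both `B̄_k` and `B_k`. -/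
structure IsUnreducedLowerBidiagonal [Zero R] (M : Matrix (Fin r) (Fin c) R) : Prop where
  eq_zero : ∀ ⦃i : Fin r⦄ ⦃j : Fin c⦄, (i : ℕ) ≠ j → (i : ℕ) ≠ j + 1 → M i j = 0
  diag_ne_zero : ∀ ⦃i : Fin r⦄ ⦃j : Fin c⦄, (i : ℕ) = j → M i j ≠ 0
  subdiag_ne_zero : ∀ ⦃i : Fin r⦄ ⦃j : Fin c⦄, (i : ℕ) = j + 1 → M i j ≠ 0

lemma isUnreducedLowerBidiagonal_of_eq_ite [Zero R] {M : Matrix (Fin r) (Fin c) R}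
    {α β : Fin c → R} (hα : ∀ j, α j ≠ 0) (hβ : ∀ j : Fin c, (j : ℕ) + 1 < r → β j ≠ 0)
    (hM : ∀ i j, M i j = if (i : ℕ) = j then α j else if (i : ℕ) = j + 1 then β j else 0) :
    IsUnreducedLowerBidiagonal M where
  eq_zero i j hij hij' := by rw [hM, if_neg hij, if_neg hij']
  diag_ne_zero i j hij := by
    rw [hM, if_pos hij]
    exact hα j
  subdiag_ne_zero i j hij := by
    rw [hM, if_neg (by omega), if_pos hij]
    exact hβ j (hij ▸ i.isLt)

protected lemma IsUnreducedLowerBidiagonal.subUL {M : Matrix (Fin r) (Fin c) ℝ}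
    (hM : IsUnreducedLowerBidiagonal M) {p q : ℕ} (hp : p ≤ r) (hq : q ≤ c) :
    IsUnreducedLowerBidiagonal (subUL M p q hp hq) where
  eq_zero _ _ hij hij' := hM.eq_zero hij hij'
  diag_ne_zero _ _ hij := hM.diag_ne_zero hij
  subdiag_ne_zero _ _ hij := hM.subdiag_ne_zero hij

lemma IsUnreducedLowerBidiagonal.transpose_mul_self [Semiring R] [NoZeroDivisors R]
    {M : Matrix (Fin r) (Fin (m + 1)) R} (hM : IsUnreducedLowerBidiagonal M) (hr : m + 1 ≤ r) :
    IsUnreducedUpperHessenberg (Mᵀ * M) where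
  eq_zero i j hij := by
    rw [mul_apply]
    refine Finset.sum_eq_zero fun s _ => mul_eq_zero.2 ?_
    by_cases hs : (s : ℕ) < i
    · exact .inl (hM.eq_zero (by omega) (by omega))
    · exact .inr (hM.eq_zero (by omega) (by omega))
  subdiag_ne_zero i := by
    have hi := i.succ.isLt.trans_le hr
    rw [mul_apply, Fintype.sum_eq_single ⟨i.succ, hi⟩]
    · exact mul_ne_zero (hM.diag_ne_zero rfl) (hM.subdiag_ne_zero (by simp))
    · intro s hs
      refine mul_eq_zero.2 ?_
      rw [← Fin.val_ne_iff, Fin.val_succ] at hs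
      by_cases hlt : (s : ℕ) < i + 1
      · exact .inl (hM.eq_zero (by rw [Fin.val_succ]; omega) (by rw [Fin.val_succ]; omega))
      · exact .inr (hM.eq_zero (by rw [Fin.val_castSucc]; omega) (by rw [Fin.val_castSucc]; omega))

lemma IsUnreducedLowerBidiagonal.mul_transpose_self [Semiring R] [NoZeroDivisors R]
    {M : Matrix (Fin (m + 1)) (Fin c) R} (hM : IsUnreducedLowerBidiagonal M) (hc : m + 1 ≤ c) :
    IsUnreducedUpperHessenberg (M * Mᵀ) where
  eq_zero i j hij := by
    rw [mul_apply]
    refine Finset.sum_eq_zero fun s _ => mul_eq_zero.2 ?_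
    by_cases hs : (s : ℕ) ≤ j
    · exact .inl (hM.eq_zero (by omega) (by omega))
    · exact .inr (hM.eq_zero (by omega) (by omega))
  subdiag_ne_zero i := by
    have hi := i.castSucc.isLt.trans_le hc
    rw [mul_apply, Fintype.sum_eq_single ⟨i.castSucc, hi⟩]
    · exact mul_ne_zero (hM.subdiag_ne_zero (by simp)) (hM.diag_ne_zero rfl)
    · intro s hs
      refine mul_eq_zero.2 ?_
      rw [← Fin.val_ne_iff, Fin.val_castSucc] at hs
      by_cases hlt : (s : ℕ) < i
      · exact .inl (hM.eq_zero (by rw [Fin.val_succ]; omega) (by rw [Fin.val_succ]; omega))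
      · exact .inr (hM.eq_zero (by rw [Fin.val_castSucc]; omega) (by rw [Fin.val_castSucc]; omega))

end Hessenberg

section Padding

variable {R ι ι' κ : Type*} [Semiring R]

lemma submatrix_mulVec_dotProduct_self [Fintype ι] [Fintype ι'] [Fintype κ] (M : Matrix ι κ R)
    {f : ι' → ι} (hf : Function.Injective f) (h : ∀ i ∉ Set.range f, ∀ j, M i j = 0) (x : κ → R) :
    (M.submatrix f id *ᵥ x) ⬝ᵥ (M.submatrix f id *ᵥ x) = (M *ᵥ x) ⬝ᵥ (M *ᵥ x) := by
  refine Fintype.sum_of_injective f hf _ _ (fun i hi => ?_) fun _ => rfl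
  simp [mulVec, dotProduct, h i hi]

variable [DecidableEq ι]

lemma one_submatrix_id_mulVec_eq_zero [Fintype ι'] {f : ι' → ι} {i : ι} (hi : i ∉ Set.range f)
    (y : ι' → R) : ((1 : Matrix ι ι R).submatrix id f *ᵥ y) i = 0 := by
  have hrow (j : ι') : (1 : Matrix ι ι R).submatrix id f i j = 0 :=
    one_apply_ne fun h => hi ⟨j, h.symm⟩
  simp only [mulVec, dotProduct, hrow, zero_mul, Finset.sum_const_zero]

variable [Fintype ι]

lemma mul_one_submatrix_id (M : Matrix κ ι R) (f : ι' → ι) :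
    M * (1 : Matrix ι ι R).submatrix id f = M.submatrix id f := by
  rw [← submatrix_id_id M, ← submatrix_mul _ _ _ _ _ Function.bijective_id, Matrix.mul_one,
    submatrix_id_id]

lemma one_submatrix_id_transpose_mul_self [DecidableEq ι'] {f : ι' → ι}
    (hf : Function.Injective f) :
    ((1 : Matrix ι ι R).submatrix id f)ᵀ * (1 : Matrix ι ι R).submatrix id f = 1 := by
  rw [mul_one_submatrix_id, transpose_submatrix, transpose_one, submatrix_submatrix,
    Function.id_comp, Function.comp_id, submatrix_one f hf]

end Padding

section Bidiagonal

variable {R : Type*} {m r c k : ℕ}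

lemma IsUnreducedLowerBidiagonal.mulVec_last [NonUnitalNonAssocSemiring R]
    {N : Matrix (Fin (m + 2)) (Fin (m + 1)) R} (hN : IsUnreducedLowerBidiagonal N)
    (x : Fin (m + 1) → R) :
    (N *ᵥ x) (Fin.last (m + 1)) = N (Fin.last (m + 1)) (Fin.last m) * x (Fin.last m) := by
  refine Fintype.sum_eq_single (Fin.last m) fun j hj => mul_eq_zero_of_left ?_ _
  have hjm := Fin.val_lt_last hj
  exact hN.eq_zero (by rw [Fin.val_last]; omega) (by rw [Fin.val_last]; omega)

lemma IsUnreducedLowerBidiagonal.singVal_subUL_self_lt_subUL_succ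
    {B : Matrix (Fin r) (Fin c) ℝ} (hB : IsUnreducedLowerBidiagonal B) (hk : 0 < k) (hkr : k < r)
    (hkc : k ≤ c) :
    singVal (subUL B k k hkr.le hkc) k < singVal (subUL B (k + 1) k hkr hkc) k := by
  obtain ⟨m, rfl⟩ := Nat.exists_eq_add_one_of_ne_zero hk.ne'
  set M := subUL B (m + 1) (m + 1) hkr.le hkc
  set N := subUL B (m + 1 + 1) (m + 1) hkr hkc
  have hM : IsUnreducedUpperHessenberg (Mᵀ * M) := (hB.subUL _ _).transpose_mul_self le_rfl
  have hN : IsUnreducedLowerBidiagonal N := hB.subUL hkr hkc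
  refine lt_singVal_card_of_forall_lt hk N fun x hx => ?_
  have hnorm : (N *ᵥ x) ⬝ᵥ (N *ᵥ x) =
      (M *ᵥ x) ⬝ᵥ (M *ᵥ x) + (N (Fin.last _) (Fin.last _) * x (Fin.last m)) ^ 2 := by
    rw [dotProduct, Fin.sum_univ_castSucc, hN.mulVec_last, ← sq]
    rfl
  rw [hnorm]
  rcases eq_or_ne (x (Fin.last m)) 0 with h0 | h0
  · have hlt := hM.mul_dotProduct_lt (singVal_sq_mul_dotProduct_le M) hx h0
    exact hlt.trans_le (le_add_of_nonneg_right (sq_nonneg _))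
  · have hne := mul_ne_zero (hN.subdiag_ne_zero (i := Fin.last _) (j := Fin.last m) rfl) h0
    exact lt_add_of_le_of_pos (singVal_sq_mul_dotProduct_le M x) (by positivity)

lemma IsUnreducedLowerBidiagonal.dotProduct_self_transpose_subUL_mulVec
    {B : Matrix (Fin r) (Fin c) ℝ} (hB : IsUnreducedLowerBidiagonal B) (hkr : k ≤ r) (hkc : k ≤ c)
    (y : Fin k → ℝ) :
    ((subUL B k k hkr hkc)ᵀ *ᵥ y) ⬝ᵥ ((subUL B k k hkr hkc)ᵀ *ᵥ y) =
      (Bᵀ.submatrix id (Fin.castLE hkr) *ᵥ y) ⬝ᵥ (Bᵀ.submatrix id (Fin.castLE hkr) *ᵥ y) := by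
  refine submatrix_mulVec_dotProduct_self (Bᵀ.submatrix id (Fin.castLE hkr))
    (Fin.castLE_injective hkc) (fun j hj i => ?_) y
  rw [Fin.range_castLE, Set.mem_ofPred] at hj
  have hi : (Fin.castLE hkr i : ℕ) < k := i.isLt
  exact hB.eq_zero (i := Fin.castLE hkr i) (j := j) (by omega) (by omega)

lemma IsUnreducedLowerBidiagonal.singVal_lt_singVal_subUL {B : Matrix (Fin r) (Fin c) ℝ}
    (hB : IsUnreducedLowerBidiagonal B) (hrc : r ≤ c) (hk : 0 < k) (hkr : k < r) :
    singVal B r < singVal (subUL B k k hkr.le (hkr.le.trans hrc)) k := by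
  obtain ⟨m, rfl⟩ := Nat.exists_eq_add_one_of_ne_zero hkr.ne_bot
  have hT : IsUnreducedUpperHessenberg (Bᵀᵀ * Bᵀ) := hB.mul_transpose_self hrc
  set E := (1 : Matrix (Fin (m + 1)) (Fin (m + 1)) ℝ).submatrix id (Fin.castLE hkr.le)
  have hE : Eᵀ * E = 1 := one_submatrix_id_transpose_mul_self (Fin.castLE_injective hkr.le)
  rw [← singVal_transpose _ hk, ← singVal_transpose _ m.succ_pos]
  refine lt_singVal_card_of_forall_lt hk _ fun y hy => ?_
  have hEy : (E *ᵥ y) ⬝ᵥ (E *ᵥ y) = y ⬝ᵥ y :=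
    mulVec_dotProduct_self_of_transpose_mul_self_eq_one hE y
  have hEy0 : E *ᵥ y ≠ 0 := fun h0 => (dotProduct_self_pos hy).ne' (by simp [← hEy, h0])
  have hlast : (E *ᵥ y) (Fin.last m) = 0 :=
    one_submatrix_id_mulVec_eq_zero (by simpa [Fin.range_castLE] using Nat.le_of_lt_succ hkr) y
  rw [hB.dotProduct_self_transpose_subUL_mulVec, ← mul_one_submatrix_id, ← mulVec_mulVec, ← hEy]
  exact hT.mul_dotProduct_lt (singVal_sq_mul_dotProduct_le Bᵀ) hEy0 hlast

lemma IsUnreducedLowerBidiagonal.apply_castLE_eq_zero {B : Matrix (Fin r) (Fin c) ℝ}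
    (hB : IsUnreducedLowerBidiagonal B) (hkc : k ≤ c) {i : Fin r} (hi : k < i) (j : Fin k) :
    B i (Fin.castLE hkc j) = 0 := by
  have hj : (Fin.castLE hkc j : ℕ) < k := j.isLt
  exact hB.eq_zero (by omega) (by omega)

lemma IsUnreducedLowerBidiagonal.dotProduct_self_subUL_succ_mulVec {B : Matrix (Fin r) (Fin c) ℝ}
    (hB : IsUnreducedLowerBidiagonal B) (hkr : k < r) (hkc : k ≤ c) (x : Fin k → ℝ) :
    (subUL B (k + 1) k hkr hkc *ᵥ x) ⬝ᵥ (subUL B (k + 1) k hkr hkc *ᵥ x) =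
      (B.submatrix id (Fin.castLE hkc) *ᵥ x) ⬝ᵥ (B.submatrix id (Fin.castLE hkc) *ᵥ x) := by
  refine submatrix_mulVec_dotProduct_self (B.submatrix id (Fin.castLE hkc))
    (Fin.castLE_injective hkr) (fun i hi j => ?_) x
  rw [Fin.range_castLE, Set.mem_ofPred, not_lt] at hi
  exact hB.apply_castLE_eq_zero hkc hi j

lemma IsUnreducedLowerBidiagonal.submatrix_castLE_mulVec_dotProduct_col
    {B : Matrix (Fin r) (Fin c) ℝ} (hB : IsUnreducedLowerBidiagonal B) (hr : m + 1 < r)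
    (hc : m + 1 < c) (x : Fin (m + 1) → ℝ) :
    (B.submatrix id (Fin.castLE hc.le) *ᵥ x) ⬝ᵥ B.col ⟨m + 1, hc⟩ =
      B ⟨m + 1, hr⟩ ⟨m, (lt_add_one m).trans hc⟩ * x (Fin.last m) *
        B ⟨m + 1, hr⟩ ⟨m + 1, hc⟩ := by
  rw [dotProduct, Fintype.sum_eq_single ⟨m + 1, hr⟩]
  · congr 1
    exact (hB.subUL hr hc.le).mulVec_last x
  · intro i hi
    rw [← Fin.val_ne_iff] at hi
    rcases lt_or_gt_of_ne hi with hlt | hgt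
    · exact mul_eq_zero_of_right _ (hB.eq_zero hlt.ne (Nat.lt_succ_of_lt hlt).ne)
    · refine mul_eq_zero_of_left ?_ _
      exact Fintype.sum_eq_zero _ fun j =>
        mul_eq_zero_of_left (hB.apply_castLE_eq_zero hc.le hgt j) _

lemma IsUnreducedLowerBidiagonal.singVal_subUL_succ_lt_singVal {B : Matrix (Fin r) (Fin c) ℝ}
    (hB : IsUnreducedLowerBidiagonal B) (hk : 0 < k) (hkr : k < r) (hkc : k < c) :
    singVal (subUL B (k + 1) k hkr hkc.le) k < singVal B k := by
  obtain ⟨m, rfl⟩ := Nat.exists_eq_add_one_of_ne_zero hk.ne'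
  set N := subUL B (m + 1 + 1) (m + 1) hkr hkc.le
  have hN : IsUnreducedUpperHessenberg (Nᵀ * N) :=
    (hB.subUL _ _).transpose_mul_self (Nat.le_succ _)
  set E := (1 : Matrix (Fin c) (Fin c) ℝ).submatrix id (Fin.castLE hkc.le)
  have hE : Eᵀ * E = 1 := one_submatrix_id_transpose_mul_self (Fin.castLE_injective hkc.le)
  have hEz : Eᵀ *ᵥ Pi.single ⟨m + 1, hkc⟩ 1 = 0 := by
    rw [mulVec_single_one]
    exact funext fun j => one_apply_ne (Fin.ne_of_gt j.isLt)
  have hBE : B * E = B.submatrix id (Fin.castLE hkc.le) := mul_one_submatrix_id B _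
  refine lt_singVal_of_orthogonal_vector hk B hE hEz (fun x => ?_) fun x hx horth => ?_
  · rw [hBE, ← hB.dotProduct_self_subUL_succ_mulVec hkr]
    exact singVal_sq_mul_dotProduct_le N x
  · rw [hBE, mulVec_single_one, hB.submatrix_castLE_mulVec_dotProduct_col hkr] at horth
    have hlast : x (Fin.last m) = 0 := (mul_eq_zero.1 ((mul_eq_zero.1 horth).resolve_right
      (hB.diag_ne_zero rfl))).resolve_left (hB.subdiag_ne_zero rfl)
    rw [hBE, ← hB.dotProduct_self_subUL_succ_mulVec hkr]
    exact hN.mul_dotProduct_lt (singVal_sq_mul_dotProduct_le N) hx hlast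

end Bidiagonal

theorem smallest_singularValues_Bbark_Bk_bounds_square_general {a d n k : ℕ}
    {P : Matrix (Fin a) (Fin n) ℝ} (hP : Pᵀ * P = 1) {Q : Matrix (Fin d) (Fin n) ℝ}
    (hQ : Qᵀ * Q = 1) {B : Matrix (Fin n) (Fin n) ℝ} (hB : IsUnreducedLowerBidiagonal B)
    (hk : 0 < k) (hkn : k < n) :
    singVal (P * B * Qᵀ) n < singVal (subUL B k k hkn.le hkn.le) k ∧
    singVal (subUL B k k hkn.le hkn.le) k < singVal (subUL B (k + 1) k hkn hkn.le) k ∧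
    singVal (subUL B (k + 1) k hkn hkn.le) k < singVal (P * B * Qᵀ) k := by
  rw [singVal_mul_mul_transpose hk B hP hQ, singVal_mul_mul_transpose (hk.trans hkn) B hP hQ]
  exact ⟨hB.singVal_lt_singVal_subUL le_rfl hk hkn,
    hB.singVal_subUL_self_lt_subUL_succ hk hkn hkn.le, hB.singVal_subUL_succ_lt_singVal hk hkn hkn⟩

/-- square case `m = n`. If `A = P B̄ Qᵀ` with `P, Q` orthogonal and `B̄` lower
bidiagonal with positive diagonal and subdiagonal, then for `1 ≤ k ≤ n-1` the smallest singular
values satisfy `σ_n < θ̄_k^{(k)} < θ_k^{(k)} < σ_k`. -/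
theorem smallest_singularValues_Bbark_Bk_bounds_square
    (n : ℕ) (hn : 2 ≤ n)
    (A : Matrix (Fin n) (Fin n) ℝ) (hAns : A.det ≠ 0)
    (P : Matrix (Fin n) (Fin n) ℝ) (hP : Pᵀ * P = 1)
    (Q : Matrix (Fin n) (Fin n) ℝ) (hQ : Qᵀ * Q = 1)
    (α : Fin n → ℝ) (hα : ∀ i, 0 < α i)
    (β : Fin n → ℝ) (hβ : ∀ i : Fin n, (i : ℕ) + 1 < n → 0 < β i)
    (Bbar : Matrix (Fin n) (Fin n) ℝ)
    (hBbar : ∀ i j : Fin n,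
      Bbar i j = if (i : ℕ) = (j : ℕ) then α j
        else if (i : ℕ) = (j : ℕ) + 1 then β j else 0)
    (hA : A = P * Bbar * Qᵀ)
    (σ : Fin n → ℝ) (hσpos : ∀ i, 0 < σ i)
    (hσstrict : ∀ i j : Fin n, i < j → σ j < σ i)
    (hσ : ∀ i : Fin n, σ i = singVal A ((i : ℕ) + 1))
    (k : ℕ) (hk1 : 1 ≤ k) (hk2 : k ≤ n - 1) :
    σ ⟨n - 1, by omega⟩ < singVal (subUL Bbar k k (by omega) (by omega)) k ∧
    singVal (subUL Bbar k k (by omega) (by omega)) k <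
      singVal (subUL Bbar (k + 1) k (by omega) (by omega)) k ∧
    singVal (subUL Bbar (k + 1) k (by omega) (by omega)) k < σ ⟨k - 1, by omega⟩ := by
  have hB : IsUnreducedLowerBidiagonal Bbar :=
    isUnreducedLowerBidiagonal_of_eq_ite (fun j => (hα j).ne') (fun j hj => (hβ j hj).ne') hBbar
  have hk : k - 1 + 1 = k := Nat.sub_add_cancel hk1
  have hn' : n - 1 + 1 = n := Nat.sub_add_cancel (by omega)
  simpa only [hσ, hA, hk, hn'] using
    smallest_singularValues_Bbark_Bk_bounds_square_general hP hQ hB hk1 (by omega : k < n)
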